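/- Let M₁, M₂ be ω-saturated Θ-models, let t ∈ U₁ and t' ∈ U₂ be such that tp_x(M₁,t) ⊆ tp_x(M₂,t') (types taken with respect to (2,1)-standard x-translations), and let x be a variable. Define A = {(a,b) : for some p,q with {p,q} = {1,2}, a ∈ U_p, b ∈ U_q and tp_x(M_p,a) ⊆ tp_x(M_q,b)}. Then A is a (2,1)-modal ⟨(M₁,t),(M₂,t')⟩-asimulation. -/

import Mathlib

namespace ModalIntAsim

/-- Binary relation symbols of the correspondence vocabulary: R, R_□, R_◇. -/
inductive RelSym : Type
  | r | box | diam
deriving DecidableEq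

/-- Formulas of the correspondence language: classical first-order logic without
identity, with variables indexed by `ℕ`, unary predicate letters `P n` (n : ℕ),
and the three binary relation symbols. -/
inductive FOForm : Type
  | falsum : FOForm
  | pred : ℕ → ℕ → FOForm            -- `pred n v` is `P_n(x_v)`
  | rel : RelSym → ℕ → ℕ → FOForm    -- `rel s v w` is `S(x_v, x_w)`
  | conj : FOForm → FOForm → FOForm
  | disj : FOForm → FOForm → FOForm
  | impl : FOForm → FOForm → FOForm
  | all : ℕ → FOForm → FOForm
  | ex : ℕ → FOForm → FOForm

namespace FOForm

/-- Free variables of a correspondence formula. -/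
def freeVars : FOForm → Finset ℕ
  | falsum => ∅
  | pred _ v => {v}
  | rel _ v w => {v, w}
  | conj f g => f.freeVars ∪ g.freeVars
  | disj f g => f.freeVars ∪ g.freeVars
  | impl f g => f.freeVars ∪ g.freeVars
  | all v f => f.freeVars \ {v}
  | ex v f => f.freeVars \ {v}

/-- The unary predicate letters occurring in a formula (the binary relation
symbols R, R_□, R_◇ are regarded as belonging to every vocabulary Σ_φ). -/
def predLetters : FOForm → Finset ℕ
  | falsum => ∅
  | pred n _ => {n}
  | rel _ _ _ => ∅
  | conj f g => f.predLetters ∪ g.predLetters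
  | disj f g => f.predLetters ∪ g.predLetters
  | impl f g => f.predLetters ∪ g.predLetters
  | all _ f => f.predLetters
  | ex _ f => f.predLetters

/-- Degree of a formula: the greatest number of nested quantifiers. -/
def degree : FOForm → ℕ
  | falsum => 0
  | pred _ _ => 0
  | rel _ _ _ => 0
  | conj f g => max f.degree g.degree
  | disj f g => max f.degree g.degree
  | impl f g => max f.degree g.degree
  | all _ f => f.degree + 1
  | ex _ f => f.degree + 1

end FOForm

/-- A model of the correspondence language: a domain together with
interpretations of R, R_□, R_◇ and of the unary predicate letters.
(A Θ-model only consults the letters in Θ.) -/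
structure Model : Type 1 where
  U : Type
  rel : U → U → Prop
  relBox : U → U → Prop
  relDiam : U → U → Prop
  pred : ℕ → U → Prop

/-- Interpretation of a binary relation symbol in a model. -/
def Model.relOf (M : Model) : RelSym → M.U → M.U → Prop
  | .r => M.rel
  | .box => M.relBox
  | .diam => M.relDiam

/-- Tarskian satisfaction of a formula in a model under an assignment. -/
def Sat (M : Model) : FOForm → (ℕ → M.U) → Prop
  | .falsum, _ => False
  | .pred n v, α => M.pred n (α v)
  | .rel s v w, α => M.relOf s (α v) (α w)
  | .conj f g, α => Sat M f α ∧ Sat M g α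
  | .disj f g, α => Sat M f α ∨ Sat M g α
  | .impl f g, α => Sat M f α → Sat M g α
  | .all v f, α => ∀ u : M.U, Sat M f (Function.update α v u)
  | .ex v f, α => ∃ u : M.U, Sat M f (Function.update α v u)

/-- `M, a ⊨ φ(x)`: φ is true in `M` under any assignment sending `x` to `a`. -/
def SatAt (M : Model) (a : M.U) (x : ℕ) (φ : FOForm) : Prop :=
  ∀ α : ℕ → M.U, α x = a → Sat M φ α

/-- Logical equivalence of correspondence formulas. -/
def Equiv (φ ψ : FOForm) : Prop :=
  ∀ (M : Model) (α : ℕ → M.U), Sat M φ α ↔ Sat M ψ α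

/-- Logical entailment between correspondence formulas. -/
def Entails (φ ψ : FOForm) : Prop :=
  ∀ (M : Model) (α : ℕ → M.U), Sat M φ α → Sat M ψ α

/-- Modal intuitionistic formulas: built from propositional letters `p n`
using ⊥, ∧, ∨, →, □, ◇. -/
inductive MForm : Type
  | bot : MForm
  | prop : ℕ → MForm
  | conj : MForm → MForm → MForm
  | disj : MForm → MForm → MForm
  | impl : MForm → MForm → MForm
  | box : MForm → MForm
  | diam : MForm → MForm

/-- The (i,j)-standard x-translation `ST_ij`.  `boxOne = true` means the box
clause (□₁) is used (i = 1), `boxOne = false` means (□₂) (i = 2); likewise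
`diamOne = true` means the diamond clause (◇₁) (j = 1) and `diamOne = false`
means (◇₂) (j = 2).  Bound variables are chosen fresh as `x+1`, `x+2`. -/
def ST (boxOne diamOne : Bool) : MForm → ℕ → FOForm
  | .bot, _ => .falsum
  | .prop n, x => .pred n x
  | .conj I J, x => .conj (ST boxOne diamOne I x) (ST boxOne diamOne J x)
  | .disj I J, x => .disj (ST boxOne diamOne I x) (ST boxOne diamOne J x)
  | .impl I J, x =>
      .all (x + 1) (.impl (.rel .r x (x + 1))
        (.impl (ST boxOne diamOne I (x + 1)) (ST boxOne diamOne J (x + 1))))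
  | .box I, x =>
      if boxOne then
        .all (x + 1) (.impl (.rel .box x (x + 1)) (ST boxOne diamOne I (x + 1)))
      else
        .all (x + 1) (.impl (.rel .r x (x + 1))
          (.all (x + 2) (.impl (.rel .box (x + 1) (x + 2)) (ST boxOne diamOne I (x + 2)))))
  | .diam I, x =>
      if diamOne then
        .ex (x + 1) (.conj (.rel .diam x (x + 1)) (ST boxOne diamOne I (x + 1)))
      else
        .all (x + 1) (.impl (.rel .r x (x + 1))
          (.ex (x + 2) (.conj (.rel .diam (x + 1) (x + 2)) (ST boxOne diamOne I (x + 2)))))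

/-! ### Conditions on relations between tuples (the k-asimulation conditions).
A relation between the two models is represented by its two directed
components; `N` is the model of the source tuple and `P` that of the target
tuple.  A tuple `(ā_m, a)` is represented as the list `as ++ [a]`, with
`m = as.length`. -/

section TupleConds

variable (N P : Model)

/-- The "p-type" condition: related tuples are nonempty and of equal length. -/
def TypeCond (A : List N.U → List P.U → Prop) : Prop :=
  ∀ as bs, A as bs → as ≠ [] ∧ as.length = bs.length

/-- (p-base). -/
def BaseCond (Θ : Set ℕ) (A : List N.U → List P.U → Prop) : Prop :=
  ∀ (as : List N.U) (bs : List P.U) (a : N.U) (b : P.U),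
    A (as ++ [a]) (bs ++ [b]) → ∀ n ∈ Θ, N.pred n a → P.pred n b

/-- (p-step). -/
def StepCond (k : ℕ) (A : List N.U → List P.U → Prop)
    (Arev : List P.U → List N.U → Prop) : Prop :=
  ∀ (as : List N.U) (bs : List P.U) (a : N.U) (b d : P.U),
    A (as ++ [a]) (bs ++ [b]) → P.rel b d → as.length < k →
    ∃ c : N.U, N.rel a c ∧ A (as ++ [a, c]) (bs ++ [b, d]) ∧
      Arev (bs ++ [b, d]) (as ++ [a, c])

/-- (p-box-1). -/
def Box1Cond (k : ℕ) (A : List N.U → List P.U → Prop) : Prop :=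
  ∀ (as : List N.U) (bs : List P.U) (a : N.U) (b d : P.U),
    A (as ++ [a]) (bs ++ [b]) → P.relBox b d → as.length < k →
    ∃ c : N.U, N.relBox a c ∧ A (as ++ [a, c]) (bs ++ [b, d])

/-- (p-box-2). -/
def Box2Cond (k : ℕ) (A : List N.U → List P.U → Prop) : Prop :=
  ∀ (as : List N.U) (bs : List P.U) (a : N.U) (b d f : P.U),
    A (as ++ [a]) (bs ++ [b]) → P.rel b d → P.relBox d f → as.length + 1 < k →
    ∃ c e : N.U, N.rel a c ∧ N.relBox c e ∧ A (as ++ [a, c, e]) (bs ++ [b, d, f])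

/-- (p-diam-1). -/
def Diam1Cond (k : ℕ) (A : List N.U → List P.U → Prop) : Prop :=
  ∀ (as : List N.U) (bs : List P.U) (a c : N.U) (b : P.U),
    A (as ++ [a]) (bs ++ [b]) → N.relDiam a c → as.length < k →
    ∃ d : P.U, P.relDiam b d ∧ A (as ++ [a, c]) (bs ++ [b, d])

/-- (p-diam-2(1)). -/
def Diam2aCond (k : ℕ) (A B : List N.U → List P.U → Prop) : Prop :=
  ∀ (as : List N.U) (bs : List P.U) (a : N.U) (b d : P.U),
    A (as ++ [a]) (bs ++ [b]) → P.rel b d → as.length + 1 < k →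
    ∃ c : N.U, N.rel a c ∧ B (as ++ [a, c]) (bs ++ [b, d])

/-- (p-diam-2(2)). -/
def Diam2bCond (k : ℕ) (B A : List N.U → List P.U → Prop) : Prop :=
  ∀ (as : List N.U) (bs : List P.U) (a c : N.U) (b : P.U),
    B (as ++ [a]) (bs ++ [b]) → N.relDiam a c → as.length < k →
    ∃ d : P.U, P.relDiam b d ∧ A (as ++ [a, c]) (bs ++ [b, d])

end TupleConds

/-- An (i,1)-modal ⟨(M₁,t),(M₂,u)⟩_k-asimulation (j = 1): a single relation `A`
given by its two directed components `A12`, `A21`. -/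
def IsKAsimD1 (boxOne : Bool) (Θ : Set ℕ) (M₁ M₂ : Model) (t : M₁.U) (u : M₂.U) (k : ℕ)
    (A12 : List M₁.U → List M₂.U → Prop) (A21 : List M₂.U → List M₁.U → Prop) : Prop :=
  TypeCond M₁ M₂ A12 ∧ TypeCond M₂ M₁ A21 ∧
  A12 [t] [u] ∧
  BaseCond M₁ M₂ Θ A12 ∧ BaseCond M₂ M₁ Θ A21 ∧
  StepCond M₁ M₂ k A12 A21 ∧ StepCond M₂ M₁ k A21 A12 ∧
  (if boxOne then Box1Cond M₁ M₂ k A12 ∧ Box1Cond M₂ M₁ k A21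
   else Box2Cond M₁ M₂ k A12 ∧ Box2Cond M₂ M₁ k A21) ∧
  Diam1Cond M₁ M₂ k A12 ∧ Diam1Cond M₂ M₁ k A21

/-- An (i,2)-modal ⟨(M₁,t),(M₂,u)⟩_k-asimulation (j = 2): an ordered pair
(A, B) of relations, each given by its two directed components. -/
def IsKAsimD2 (boxOne : Bool) (Θ : Set ℕ) (M₁ M₂ : Model) (t : M₁.U) (u : M₂.U) (k : ℕ)
    (A12 : List M₁.U → List M₂.U → Prop) (A21 : List M₂.U → List M₁.U → Prop)
    (B12 : List M₁.U → List M₂.U → Prop) (B21 : List M₂.U → List M₁.U → Prop) : Prop :=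
  TypeCond M₁ M₂ A12 ∧ TypeCond M₂ M₁ A21 ∧
  TypeCond M₁ M₂ B12 ∧ TypeCond M₂ M₁ B21 ∧
  A12 [t] [u] ∧
  BaseCond M₁ M₂ Θ A12 ∧ BaseCond M₂ M₁ Θ A21 ∧
  StepCond M₁ M₂ k A12 A21 ∧ StepCond M₂ M₁ k A21 A12 ∧
  (if boxOne then Box1Cond M₁ M₂ k A12 ∧ Box1Cond M₂ M₁ k A21
   else Box2Cond M₁ M₂ k A12 ∧ Box2Cond M₂ M₁ k A21) ∧
  Diam2aCond M₁ M₂ k A12 B12 ∧ Diam2aCond M₂ M₁ k A21 B21 ∧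
  Diam2bCond M₁ M₂ k B12 A12 ∧ Diam2bCond M₂ M₁ k B21 A21

/-- φ(x) is invariant with respect to (i,1)-modal k-asimulations. -/
def KInvariantD1 (boxOne : Bool) (x : ℕ) (φ : FOForm) (k : ℕ) : Prop :=
  ∀ Θ : Set ℕ, (φ.predLetters : Set ℕ) ⊆ Θ →
  ∀ (M₁ M₂ : Model) (t : M₁.U) (u : M₂.U)
    (A12 : List M₁.U → List M₂.U → Prop) (A21 : List M₂.U → List M₁.U → Prop),
    IsKAsimD1 boxOne Θ M₁ M₂ t u k A12 A21 →
    ∀ (a : M₁.U) (b : M₂.U), A12 [a] [b] → SatAt M₁ a x φ → SatAt M₂ b x φ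

/-- φ(x) is invariant with respect to (i,2)-modal k-asimulations. -/
def KInvariantD2 (boxOne : Bool) (x : ℕ) (φ : FOForm) (k : ℕ) : Prop :=
  ∀ Θ : Set ℕ, (φ.predLetters : Set ℕ) ⊆ Θ →
  ∀ (M₁ M₂ : Model) (t : M₁.U) (u : M₂.U)
    (A12 : List M₁.U → List M₂.U → Prop) (A21 : List M₂.U → List M₁.U → Prop)
    (B12 : List M₁.U → List M₂.U → Prop) (B21 : List M₂.U → List M₁.U → Prop),
    IsKAsimD2 boxOne Θ M₁ M₂ t u k A12 A21 B12 B21 →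
    ∀ (a : M₁.U) (b : M₂.U), A12 [a] [b] → SatAt M₁ a x φ → SatAt M₂ b x φ

/-! ### Conditions for asimulations *simpliciter* (relations between elements). -/

section ElemConds

variable (N P : Model)

/-- (base). -/
def BaseCondE (Θ : Set ℕ) (A : N.U → P.U → Prop) : Prop :=
  ∀ (a : N.U) (b : P.U), A a b → ∀ n ∈ Θ, N.pred n a → P.pred n b

/-- (step). -/
def StepCondE (A : N.U → P.U → Prop) (Arev : P.U → N.U → Prop) : Prop :=
  ∀ (a : N.U) (b d : P.U), A a b → P.rel b d →
    ∃ c : N.U, N.rel a c ∧ A c d ∧ Arev d c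

/-- (box-1). -/
def Box1CondE (A : N.U → P.U → Prop) : Prop :=
  ∀ (a : N.U) (b d : P.U), A a b → P.relBox b d →
    ∃ c : N.U, N.relBox a c ∧ A c d

/-- (box-2). -/
def Box2CondE (A : N.U → P.U → Prop) : Prop :=
  ∀ (a : N.U) (b d f : P.U), A a b → P.rel b d → P.relBox d f →
    ∃ c e : N.U, N.rel a c ∧ N.relBox c e ∧ A e f

/-- (diam-1). -/
def Diam1CondE (A : N.U → P.U → Prop) : Prop :=
  ∀ (a c : N.U) (b : P.U), A a b → N.relDiam a c →
    ∃ d : P.U, P.relDiam b d ∧ A c d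

/-- (diam-2(1)). -/
def Diam2aCondE (A B : N.U → P.U → Prop) : Prop :=
  ∀ (a : N.U) (b d : P.U), A a b → P.rel b d →
    ∃ c : N.U, N.rel a c ∧ B c d

/-- (diam-2(2)). -/
def Diam2bCondE (B A : N.U → P.U → Prop) : Prop :=
  ∀ (a c : N.U) (b : P.U), B a b → N.relDiam a c →
    ∃ d : P.U, P.relDiam b d ∧ A c d

end ElemConds

/-- An (i,1)-modal ⟨(M₁,t),(M₂,u)⟩-asimulation (j = 1). -/
def IsAsimD1 (boxOne : Bool) (Θ : Set ℕ) (M₁ M₂ : Model) (t : M₁.U) (u : M₂.U)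
    (A12 : M₁.U → M₂.U → Prop) (A21 : M₂.U → M₁.U → Prop) : Prop :=
  A12 t u ∧
  BaseCondE M₁ M₂ Θ A12 ∧ BaseCondE M₂ M₁ Θ A21 ∧
  StepCondE M₁ M₂ A12 A21 ∧ StepCondE M₂ M₁ A21 A12 ∧
  (if boxOne then Box1CondE M₁ M₂ A12 ∧ Box1CondE M₂ M₁ A21
   else Box2CondE M₁ M₂ A12 ∧ Box2CondE M₂ M₁ A21) ∧
  Diam1CondE M₁ M₂ A12 ∧ Diam1CondE M₂ M₁ A21

/-- An (i,2)-modal ⟨(M₁,t),(M₂,u)⟩-asimulation (j = 2). -/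
def IsAsimD2 (boxOne : Bool) (Θ : Set ℕ) (M₁ M₂ : Model) (t : M₁.U) (u : M₂.U)
    (A12 : M₁.U → M₂.U → Prop) (A21 : M₂.U → M₁.U → Prop)
    (B12 : M₁.U → M₂.U → Prop) (B21 : M₂.U → M₁.U → Prop) : Prop :=
  A12 t u ∧
  BaseCondE M₁ M₂ Θ A12 ∧ BaseCondE M₂ M₁ Θ A21 ∧
  StepCondE M₁ M₂ A12 A21 ∧ StepCondE M₂ M₁ A21 A12 ∧
  (if boxOne then Box1CondE M₁ M₂ A12 ∧ Box1CondE M₂ M₁ A21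
   else Box2CondE M₁ M₂ A12 ∧ Box2CondE M₂ M₁ A21) ∧
  Diam2aCondE M₁ M₂ A12 B12 ∧ Diam2aCondE M₂ M₁ A21 B21 ∧
  Diam2bCondE M₁ M₂ B12 A12 ∧ Diam2bCondE M₂ M₁ B21 A21

/-- φ(x) is invariant with respect to (i,1)-modal asimulations. -/
def InvariantD1 (boxOne : Bool) (x : ℕ) (φ : FOForm) : Prop :=
  ∀ Θ : Set ℕ, (φ.predLetters : Set ℕ) ⊆ Θ →
  ∀ (M₁ M₂ : Model) (t : M₁.U) (u : M₂.U)
    (A12 : M₁.U → M₂.U → Prop) (A21 : M₂.U → M₁.U → Prop),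
    IsAsimD1 boxOne Θ M₁ M₂ t u A12 A21 →
    ∀ (a : M₁.U) (b : M₂.U), A12 a b → SatAt M₁ a x φ → SatAt M₂ b x φ

/-- φ(x) is invariant with respect to (i,2)-modal asimulations. -/
def InvariantD2 (boxOne : Bool) (x : ℕ) (φ : FOForm) : Prop :=
  ∀ Θ : Set ℕ, (φ.predLetters : Set ℕ) ⊆ Θ →
  ∀ (M₁ M₂ : Model) (t : M₁.U) (u : M₂.U)
    (A12 : M₁.U → M₂.U → Prop) (A21 : M₂.U → M₁.U → Prop)
    (B12 : M₁.U → M₂.U → Prop) (B21 : M₂.U → M₁.U → Prop),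
    IsAsimD2 boxOne Θ M₁ M₂ t u A12 A21 B12 B21 →
    ∀ (a : M₁.U) (b : M₂.U), A12 a b → SatAt M₁ a x φ → SatAt M₂ b x φ

/-! ### Types, complete conjunctions, ω-saturation. -/

/-- `int(φ,x,l)`: the set of (2,2)-standard x-translations of modal
intuitionistic formulas which are (Σ_φ,x,l)-formulas. -/
def intSet (φ : FOForm) (x l : ℕ) : Set FOForm :=
  {ψ | (∃ I : MForm, ψ = ST false false I x) ∧
    ψ.predLetters ⊆ φ.predLetters ∧ ψ.freeVars ⊆ {x} ∧ ψ.degree ≤ l}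

/-- `tp_l(φ(x),M,a)`. -/
def tpSet (φ : FOForm) (x l : ℕ) (M : Model) (a : M.U) : Set FOForm :=
  {ψ | ψ ∈ intSet φ x l ∧ SatAt M a x ψ}

/-- Conjunction of a nonempty list of formulas. -/
def listConj : FOForm → List FOForm → FOForm
  | ψ, [] => ψ
  | ψ, χ :: L => FOForm.conj ψ (listConj χ L)

/-- Ψ(x) is a complete (φ,x,k)-conjunction. -/
def IsCompleteConj (φ : FOForm) (x k : ℕ) (Ψ : FOForm) : Prop :=
  (∃ (ψ₀ : FOForm) (L : List FOForm), ψ₀ ∈ intSet φ x k ∧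
    (∀ χ ∈ L, χ ∈ intSet φ x k) ∧ Ψ = listConj ψ₀ L) ∧
  ∃ (M : Model) (a : M.U), SatAt M a x (FOForm.conj Ψ φ) ∧
    ∀ ψ ∈ tpSet φ x k M a, Entails Ψ ψ

/-- `int_x(Θ)` for the (i,j)-standard translation. -/
def intX (Θ : Set ℕ) (boxOne diamOne : Bool) (x : ℕ) : Set FOForm :=
  {ψ | (∃ I : MForm, ψ = ST boxOne diamOne I x) ∧ (ψ.predLetters : Set ℕ) ⊆ Θ}

/-- `tp_x(M,t)` for the (i,j)-standard translation. -/
def tpX (Θ : Set ℕ) (boxOne diamOne : Bool) (x : ℕ) (M : Model) (t : M.U) : Set FOForm :=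
  {ψ | ψ ∈ intX Θ boxOne diamOne x ∧ SatAt M t x ψ}

/-- `imp_x(M,t) = ⋂ { t̄p_x(M,u) : t R_◇ u }` (for the (2,2)-translation). -/
def impX (Θ : Set ℕ) (x : ℕ) (M : Model) (t : M.U) : Set FOForm :=
  {ψ | ψ ∈ intX Θ false false x ∧ ∀ u : M.U, M.relDiam t u → ¬ SatAt M u x ψ}

/-- ω-saturation: for every finite tuple of parameters (the first `n` values of
an assignment `α`) and every set `Γ` of formulas with finitely many free
variables beyond the parameters, if `Γ` is consistent with the first-order
theory of `[M,ā]` (i.e. satisfiable together with it in some model), then `Γ`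
is realized in `[M,ā]`. -/
def OmegaSaturated (M : Model) : Prop :=
  ∀ (n : ℕ) (α : ℕ → M.U) (Γ : Set FOForm),
    (∃ k : ℕ, ∀ γ ∈ Γ, γ.freeVars ⊆ Finset.range (n + k)) →
    (∃ (N : Model) (β : ℕ → N.U),
      (∀ ψ : FOForm, ψ.freeVars ⊆ Finset.range n → Sat M ψ α → Sat N ψ β) ∧
      ∀ γ ∈ Γ, Sat N γ β) →
    ∃ α' : ℕ → M.U, (∀ i < n, α' i = α i) ∧ ∀ γ ∈ Γ, Sat M γ α'

/-! ### Relativization to a class κ of models. -/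

/-- κ(Θ) is first-order axiomatizable for every finite Θ (with R ∈ Θ): for
every finite set `S` of unary predicate letters there is a set of Θ-sentences
axiomatizing membership in κ. -/
def FinAxiomatizable (κ : Set Model) : Prop :=
  ∀ S : Finset ℕ, ∃ Ax : Set FOForm,
    (∀ ψ ∈ Ax, ψ.freeVars = ∅ ∧ (ψ.predLetters : Set ℕ) ⊆ (S : Set ℕ)) ∧
    ∀ M : Model, M ∈ κ ↔ ∀ ψ ∈ Ax, ∀ α : ℕ → M.U, Sat M ψ α

/-- φ κ-follows from ψ: {ψ, ¬φ} is not κ-satisfiable. -/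
def KappaFollows (κ : Set Model) (ψ φ : FOForm) : Prop :=
  ¬ ∃ M : Model, M ∈ κ ∧ ∃ α : ℕ → M.U, Sat M ψ α ∧ ¬ Sat M φ α

/-- κ-equivalence of formulas. -/
def KappaEquiv (κ : Set Model) (φ ψ : FOForm) : Prop :=
  KappaFollows κ φ ψ ∧ KappaFollows κ ψ φ

/-- φ(x) is κ-invariant with respect to (i,1)-modal asimulations. -/
def KappaInvariantD1 (κ : Set Model) (boxOne : Bool) (x : ℕ) (φ : FOForm) : Prop :=
  ∀ Θ : Set ℕ, (φ.predLetters : Set ℕ) ⊆ Θ →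
  ∀ (M₁ M₂ : Model), M₁ ∈ κ → M₂ ∈ κ →
  ∀ (t : M₁.U) (u : M₂.U)
    (A12 : M₁.U → M₂.U → Prop) (A21 : M₂.U → M₁.U → Prop),
    IsAsimD1 boxOne Θ M₁ M₂ t u A12 A21 →
    ∀ (a : M₁.U) (b : M₂.U), A12 a b → SatAt M₁ a x φ → SatAt M₂ b x φ

/-- φ(x) is κ-invariant with respect to (i,2)-modal asimulations. -/
def KappaInvariantD2 (κ : Set Model) (boxOne : Bool) (x : ℕ) (φ : FOForm) : Prop :=
  ∀ Θ : Set ℕ, (φ.predLetters : Set ℕ) ⊆ Θ →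
  ∀ (M₁ M₂ : Model), M₁ ∈ κ → M₂ ∈ κ →
  ∀ (t : M₁.U) (u : M₂.U)
    (A12 : M₁.U → M₂.U → Prop) (A21 : M₂.U → M₁.U → Prop)
    (B12 : M₁.U → M₂.U → Prop) (B21 : M₂.U → M₁.U → Prop),
    IsAsimD2 boxOne Θ M₁ M₂ t u A12 A21 B12 B21 →
    ∀ (a : M₁.U) (b : M₂.U), A12 a b → SatAt M₁ a x φ → SatAt M₂ b x φ

/-- φ(x) is κ-invariant with respect to (i,j)-modal asimulations
(`diamOne = true` means j = 1). -/
def KappaInvariant (κ : Set Model) (boxOne diamOne : Bool) (x : ℕ) (φ : FOForm) : Prop :=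
  if diamOne then KappaInvariantD1 κ boxOne x φ else KappaInvariantD2 κ boxOne x φ


/-!
Inclusion of types is inclusion of the sets of modal formulas forced at the two points. To match a
point `d` of one model by a point `c` of the other, one realizes in the latter the type asking `c`
to force a set `S` of modal formulas, closed under `∧`, and to refute a set `T`, closed under `∨`.
By the closure properties finite satisfiability only concerns one `I ∈ S` and one `J ∈ T`, and if
it failed, `a` would force `I → J` or `□J`, or `b` would refute `◇I`, against `a A b`.

The definition of ω-saturation asks for a type to be satisfiable in some model; that finite
satisfiability suffices is compactness, proved here with an ultrapower.
-/

theorem dependsOn_sat (M : Model) (φ : FOForm) :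
    DependsOn (Sat M φ) (φ.freeVars : Set ℕ) := by
  have update_eq {f : FOForm} {v : ℕ} {α β : ℕ → M.U} (u : M.U)
      (h : ∀ w ∈ f.freeVars \ {v}, α w = β w) :
      ∀ w ∈ f.freeVars, Function.update α v u w = Function.update β v u w := by
    intro w hw
    by_cases hwv : w = v
    · simp [hwv]
    · simp [hwv, h w (by simp [hw, hwv])]
  induction φ with
  | falsum => exact fun _ _ _ => rfl
  | pred n v =>
    intro α β h
    simp [Sat, h v (by simp [FOForm.freeVars])]
  | rel s v w =>
    intro α β h
    simp [Sat, h v (by simp [FOForm.freeVars]), h w (by simp [FOForm.freeVars])]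
  | conj f g hf hg | disj f g hf hg | impl f g hf hg =>
    intro α β h
    simp only [FOForm.freeVars, Finset.coe_union] at h
    simp only [Sat, hf fun v hv => h v (.inl hv), hg fun v hv => h v (.inr hv)]
  | all v f hf => exact fun α β h => forall_congr fun u => hf (update_eq u h)
  | ex v f hf => exact fun α β h => congrArg Exists (funext fun u => hf (update_eq u h))

section Ultraproduct

variable {ι : Type}

/-- The ultraproduct of a family of models, used for compactness. Since the language has no
identity, its elements are plain choice functions, not classes of functions modulo `l`. -/
def Model.ultraproduct (M : ι → Model) (l : Ultrafilter ι) : Model where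
  U := ∀ i, (M i).U
  rel f g := ∀ᶠ i in (l : Filter ι), (M i).rel (f i) (g i)
  relBox f g := ∀ᶠ i in (l : Filter ι), (M i).relBox (f i) (g i)
  relDiam f g := ∀ᶠ i in (l : Filter ι), (M i).relDiam (f i) (g i)
  pred n f := ∀ᶠ i in (l : Filter ι), (M i).pred n (f i)

theorem eventually_ultrafilter_forall {X : ι → Type*} [∀ i, Nonempty (X i)] (l : Ultrafilter ι)
    {p : ∀ i, X i → Prop} :
    (∀ᶠ i in (l : Filter ι), ∀ u, p i u) ↔ ∀ f : ∀ i, X i, ∀ᶠ i in (l : Filter ι), p i (f i) := by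
  rw [← not_iff_not]
  simp only [← Ultrafilter.eventually_not, not_forall, Filter.skolem]

theorem update_eval {X : ι → Type*} (α : ℕ → ∀ i, X i) (v : ℕ) (u : ∀ i, X i) (i : ι) :
    (fun w => Function.update α v u w i) = Function.update (fun w => α w i) v (u i) := by
  funext w
  exact Function.apply_update (fun _ (f : ∀ i, X i) => f i) α v u w

theorem sat_ultraproduct (M : ι → Model) (l : Ultrafilter ι) (φ : FOForm)
    (α : ℕ → ∀ i, (M i).U) :
    Sat (Model.ultraproduct M l) φ α ↔ ∀ᶠ i in (l : Filter ι), Sat (M i) φ fun v => α v i := by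
  have (i : ι) : Nonempty (M i).U := ⟨α 0 i⟩
  induction φ generalizing α with
  | falsum => simp only [Sat, Filter.eventually_false_iff_eq_bot, l.neBot.ne]
  | pred n v => rfl
  | rel s v w => cases s <;> rfl
  | conj f g hf hg => simp only [Sat, hf, hg, Filter.eventually_and]
  | disj f g hf hg => simp only [Sat, hf, hg, Ultrafilter.eventually_or]
  | impl f g hf hg => simp only [Sat, hf, hg, Ultrafilter.eventually_imp]
  | all v f hf =>
    simp only [Sat, eventually_ultrafilter_forall, ← update_eval]
    exact forall_congr' fun u => hf (Function.update α v u)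
  | ex v f hf =>
    simp only [Sat, Filter.skolem, ← update_eval]
    exact exists_congr fun u => hf (Function.update α v u)

end Ultraproduct

theorem OmegaSaturated.exists_forall_sat {M : Model} (hM : OmegaSaturated M) {n k : ℕ}
    {α : ℕ → M.U} {J : Type} {Γ : J → FOForm}
    (hΓ : ∀ j, (Γ j).freeVars ⊆ Finset.range (n + k))
    (hfin : ∀ F : Finset J, ∃ β : ℕ → M.U, (∀ v < n, β v = α v) ∧ ∀ j ∈ F, Sat M (Γ j) β) :
    ∃ β : ℕ → M.U, (∀ v < n, β v = α v) ∧ ∀ j, Sat M (Γ j) β := by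
  choose A hAα hAΓ using hfin
  let l : Ultrafilter (Finset J) := .of Filter.atTop
  suffices ∃ (N : Model) (β : ℕ → N.U),
      (∀ ψ : FOForm, ψ.freeVars ⊆ Finset.range n → Sat M ψ α → Sat N ψ β) ∧
      ∀ γ ∈ Set.range Γ, Sat N γ β by
    simpa only [Set.forall_mem_range] using
      hM n α (Set.range Γ) ⟨k, Set.forall_mem_range.mpr hΓ⟩ this
  refine ⟨.ultraproduct (fun _ => M) l, fun v F => A F v, fun ψ hψ hα => ?_,
    Set.forall_mem_range.mpr fun j => ?_⟩
  · refine (sat_ultraproduct _ l ψ _).mpr (.of_forall fun F => ?_)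
    have hαF : ∀ v ∈ ψ.freeVars, α v = A F v :=
      fun v hv => (hAα F v (Finset.mem_range.mp (hψ hv))).symm
    exact (dependsOn_sat M ψ hαF).mp hα
  · have hj : ∀ᶠ F in (l : Filter (Finset J)), {j} ≤ F :=
      (Filter.eventually_ge_atTop {j}).filter_mono (Ultrafilter.of_le _)
    exact (sat_ultraproduct _ l (Γ j) _).mpr
      (hj.mono fun F hF => hAΓ F j (Finset.singleton_subset_iff.mp hF))

section Forcing

variable (i j : Bool)

/-- Kripke forcing of modal intuitionistic formulas. As for `ST`, `i` and `j` select the clauses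
for `□` and `◇`: the value `true` means (□₁), resp. (◇₁), and `false` means (□₂), resp. (◇₂). -/
def Forces (M : Model) : MForm → M.U → Prop
  | .bot, _ => False
  | .prop n, a => M.pred n a
  | .conj I J, a => Forces M I a ∧ Forces M J a
  | .disj I J, a => Forces M I a ∨ Forces M J a
  | .impl I J, a => ∀ c, M.rel a c → Forces M I c → Forces M J c
  | .box I, a =>
      if i then ∀ c, M.relBox a c → Forces M I c
      else ∀ c, M.rel a c → ∀ e, M.relBox c e → Forces M I e
  | .diam I, a =>
      if j then ∃ c, M.relDiam a c ∧ Forces M I c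
      else ∀ c, M.rel a c → ∃ e, M.relDiam c e ∧ Forces M I e

/-- The propositional letters of a modal formula; they decide which formulas belong to the
language of a set `Θ` of letters. -/
def MForm.letters : MForm → Finset ℕ
  | .bot => ∅
  | .prop n => {n}
  | .conj I J | .disj I J | .impl I J => I.letters ∪ J.letters
  | .box I | .diam I => I.letters

theorem predLetters_ST (I : MForm) (x : ℕ) : (ST i j I x).predLetters = I.letters := by
  induction I generalizing x with
  | bot | prop n => rfl
  | conj I J hI hJ | disj I J hI hJ | impl I J hI hJ =>
    simp [ST, FOForm.predLetters, MForm.letters, hI, hJ]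
  | box I hI | diam I hI =>
    simp only [ST]
    split <;> simp [FOForm.predLetters, MForm.letters, hI]

theorem freeVars_ST (I : MForm) (x : ℕ) : (ST i j I x).freeVars ⊆ {x} := by
  induction I generalizing x with
  | bot => exact Finset.empty_subset _
  | prop n => exact subset_rfl
  | conj I J hI hJ | disj I J hI hJ => exact Finset.union_subset (hI x) (hJ x)
  | impl I J hI hJ =>
    have hI := hI (x + 1)
    have hJ := hJ (x + 1)
    simp only [ST, FOForm.freeVars]
    grind
  | box I hI | diam I hI =>
    have h₁ := hI (x + 1)
    have h₂ := hI (x + 2)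
    simp only [ST]
    split <;> simp only [FOForm.freeVars] <;> grind

theorem sat_ST (M : Model) (I : MForm) (x : ℕ) (α : ℕ → M.U) :
    Sat M (ST i j I x) α ↔ Forces i j M I (α x) := by
  induction I generalizing x α with
  | bot | prop n => rfl
  | conj I J hI hJ | disj I J hI hJ | impl I J hI hJ =>
    simp [ST, Sat, Forces, Model.relOf, hI, hJ]
  | box I hI | diam I hI =>
    simp only [ST, Forces]
    split <;> simp [Sat, Model.relOf, hI]

theorem satAt_ST (M : Model) (a : M.U) (x : ℕ) (I : MForm) :
    SatAt M a x (ST i j I x) ↔ Forces i j M I a :=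
  ⟨fun h => (sat_ST i j M I x fun _ => a).mp (h _ rfl),
    fun h α hα => (sat_ST i j M I x α).mpr (hα ▸ h)⟩

/-- The modal `Θ`-theory of a point: the modal counterpart of `tpX`, independent of a variable. -/
def modalTheory (Θ : Set ℕ) (M : Model) (a : M.U) : Set MForm :=
  {I | (I.letters : Set ℕ) ⊆ Θ ∧ Forces i j M I a}

/-- The modal formulas in the language of `Θ` which a point does not force: the formulas to be
refuted at a point whose `Θ`-theory is to be included in that of `a`. -/
def modalCotheory (Θ : Set ℕ) (M : Model) (a : M.U) : Set MForm :=
  {I | (I.letters : Set ℕ) ⊆ Θ ∧ ¬ Forces i j M I a}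

theorem ST_mem_tpX {Θ : Set ℕ} {x : ℕ} {M : Model} {a : M.U} {I : MForm} :
    ST i j I x ∈ tpX Θ i j x M a ↔ I ∈ modalTheory i j Θ M a := by
  simp only [tpX, intX, modalTheory, Set.mem_ofPred_eq, predLetters_ST, satAt_ST]
  exact and_congr_left fun _ => and_iff_right ⟨I, rfl⟩

theorem tpX_subset_tpX_iff {Θ : Set ℕ} {x : ℕ} {N P : Model} {a : N.U} {b : P.U} :
    tpX Θ i j x N a ⊆ tpX Θ i j x P b ↔ modalTheory i j Θ N a ⊆ modalTheory i j Θ P b := by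
  constructor
  · intro h I hI
    exact (ST_mem_tpX i j).mp (h ((ST_mem_tpX i j (x := x)).mpr hI))
  · intro h ψ hψ
    obtain ⟨I, rfl⟩ := hψ.1.1
    exact (ST_mem_tpX i j).mpr (h ((ST_mem_tpX i j).mp hψ))

end Forcing

/-- A binary relation on a model which is defined by a first-order formula in the variables
`0` and `1`. -/
def Model.Definable₂ (M : Model) (D : M.U → M.U → Prop) : Prop :=
  ∃ θ : FOForm, θ.freeVars ⊆ Finset.range 2 ∧ ∀ α, Sat M θ α ↔ D (α 0) (α 1)

theorem Model.definable₂_relOf (M : Model) (s : RelSym) : M.Definable₂ (M.relOf s) :=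
  ⟨.rel s 0 1, by simp [FOForm.freeVars, Finset.insert_subset_iff], fun _ => Iff.rfl⟩

theorem Model.definable₂_comp_relOf (M : Model) (s s' : RelSym) :
    M.Definable₂ (Relation.Comp (M.relOf s) (M.relOf s')) := by
  refine ⟨.ex 2 (.conj (.rel s 0 2) (.rel s' 2 1)), ?_, fun α => ?_⟩
  · simp only [FOForm.freeVars]
    decide
  · simp [Sat, Relation.Comp]

section Saturation

variable {i j : Bool} {M : Model}

theorem directed_forces_not_forces {S T : Set MForm}
    (hS : ∀ I ∈ S, ∀ J ∈ S, .conj I J ∈ S) (hT : ∀ I ∈ T, ∀ J ∈ T, .disj I J ∈ T) :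
    Directed (· ⊇ ·) fun p : S × T => {c | Forces i j M p.1 c ∧ ¬ Forces i j M p.2 c} := by
  rintro ⟨⟨I, hI⟩, ⟨J, hJ⟩⟩ ⟨⟨I', hI'⟩, ⟨J', hJ'⟩⟩
  refine ⟨⟨⟨_, hS I hI I' hI'⟩, ⟨_, hT J hJ J' hJ'⟩⟩, ?_, ?_⟩ <;>
    simp +contextual [Forces]

theorem OmegaSaturated.exists_forces_not_forces (hM : OmegaSaturated M)
    {D : M.U → M.U → Prop} (hD : M.Definable₂ D) {a : M.U} {S T : Set MForm}
    (hS₀ : S.Nonempty) (hS : ∀ I ∈ S, ∀ J ∈ S, .conj I J ∈ S)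
    (hT₀ : T.Nonempty) (hT : ∀ I ∈ T, ∀ J ∈ T, .disj I J ∈ T)
    (h : ∀ I ∈ S, ∀ J ∈ T, ∃ c, D a c ∧ Forces i j M I c ∧ ¬ Forces i j M J c) :
    ∃ c, D a c ∧ (∀ I ∈ S, Forces i j M I c) ∧ ∀ J ∈ T, ¬ Forces i j M J c := by
  obtain ⟨θ, hθ, hθD⟩ := hD
  have : Nonempty (S × T) := ⟨⟨_, hS₀.some_mem⟩, ⟨_, hT₀.some_mem⟩⟩
  let Γ (p : S × T) : FOForm := .conj θ (.conj (ST i j p.1 1) (.impl (ST i j p.2 1) .falsum))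
  have sat_Γ (p : S × T) (α : ℕ → M.U) : Sat M (Γ p) α ↔
      D (α 0) (α 1) ∧ Forces i j M p.1 (α 1) ∧ ¬ Forces i j M p.2 (α 1) := by
    simp only [Γ, Sat, hθD, sat_ST, imp_false]
  have freeVars_Γ (p : S × T) : (Γ p).freeVars ⊆ Finset.range (1 + 1) := by
    have hp (I : MForm) : (ST i j I 1).freeVars ⊆ Finset.range 2 :=
      (freeVars_ST i j I 1).trans (by decide)
    exact Finset.union_subset hθ
      (Finset.union_subset (hp _) (Finset.union_subset (hp _) (Finset.empty_subset _)))
  have hfin (F : Finset (S × T)) :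
      ∃ β : ℕ → M.U, (∀ v < 1, β v = a) ∧ ∀ p ∈ F, Sat M (Γ p) β := by
    obtain ⟨p, hp⟩ := (directed_forces_not_forces hS hT).finset_le F
    obtain ⟨c, hac, hc⟩ := h p.1 p.1.2 p.2 p.2.2
    refine ⟨fun v => if v = 0 then a else c, fun v hv => if_pos (Nat.lt_one_iff.mp hv),
      fun q hq => (sat_Γ q _).mpr ⟨hac, hp q hq hc⟩⟩
  obtain ⟨β, hβa, hβ⟩ := hM.exists_forall_sat freeVars_Γ hfin
  simp only [sat_Γ, hβa 0 one_pos, Prod.forall, Subtype.forall] at hβ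
  obtain ⟨I₀, hI₀⟩ := hS₀
  obtain ⟨J₀, hJ₀⟩ := hT₀
  exact ⟨β 1, (hβ I₀ hI₀ J₀ hJ₀).1, fun I hI => (hβ I hI J₀ hJ₀).2.1,
    fun J hJ => (hβ I₀ hI₀ J hJ).2.2⟩

theorem OmegaSaturated.exists_forall_forces (hM : OmegaSaturated M)
    {D : M.U → M.U → Prop} (hD : M.Definable₂ D) {a : M.U} {S : Set MForm}
    (hS₀ : S.Nonempty) (hS : ∀ I ∈ S, ∀ J ∈ S, .conj I J ∈ S)
    (h : ∀ I ∈ S, ∃ c, D a c ∧ Forces i j M I c) :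
    ∃ c, D a c ∧ ∀ I ∈ S, Forces i j M I c := by
  obtain ⟨c, hac, hc, -⟩ := hM.exists_forces_not_forces hD (a := a) hS₀ hS
    (T := {J | ∀ c, ¬ Forces i j M J c}) ⟨.bot, fun _ => id⟩
    (fun _ hI _ hJ c => not_or.mpr ⟨hI c, hJ c⟩)
    (fun I hI J hJ => (h I hI).imp fun c hc => ⟨hc.1, hc.2, hJ c⟩)
  exact ⟨c, hac, hc⟩

theorem OmegaSaturated.exists_forall_not_forces (hM : OmegaSaturated M)
    {D : M.U → M.U → Prop} (hD : M.Definable₂ D) {a : M.U} {T : Set MForm}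
    (hT₀ : T.Nonempty) (hT : ∀ I ∈ T, ∀ J ∈ T, .disj I J ∈ T)
    (h : ∀ J ∈ T, ∃ c, D a c ∧ ¬ Forces i j M J c) :
    ∃ c, D a c ∧ ∀ J ∈ T, ¬ Forces i j M J c := by
  obtain ⟨c, hac, -, hc⟩ := hM.exists_forces_not_forces hD (a := a)
    (S := {I | ∀ c, Forces i j M I c}) ⟨.impl .bot .bot, fun _ _ _ => id⟩
    (fun _ hI _ hJ c => ⟨hI c, hJ c⟩) hT₀ hT
    (fun I hI J hJ => (h J hJ).imp fun c hc => ⟨hc.1, hI c, hc.2⟩)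
  exact ⟨c, hac, hc⟩

end Saturation

section ModalTheory

variable {i j : Bool} {Θ : Set ℕ} {M : Model}

theorem bot_mem_modalCotheory (a : M.U) : .bot ∈ modalCotheory i j Θ M a :=
  ⟨by simp [MForm.letters], id⟩

theorem bot_impl_bot_mem_modalTheory (a : M.U) : .impl .bot .bot ∈ modalTheory i j Θ M a :=
  ⟨by simp [MForm.letters], fun _ _ => id⟩

theorem conj_mem_modalTheory {a : M.U} {I J : MForm} (hI : I ∈ modalTheory i j Θ M a)
    (hJ : J ∈ modalTheory i j Θ M a) : .conj I J ∈ modalTheory i j Θ M a :=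
  ⟨by simp [MForm.letters, hI.1, hJ.1], hI.2, hJ.2⟩

theorem disj_mem_modalCotheory {a : M.U} {I J : MForm} (hI : I ∈ modalCotheory i j Θ M a)
    (hJ : J ∈ modalCotheory i j Θ M a) : .disj I J ∈ modalCotheory i j Θ M a :=
  ⟨by simp [MForm.letters, hI.1, hJ.1], not_or.mpr ⟨hI.2, hJ.2⟩⟩

end ModalTheory

section Asimulation

variable {i j : Bool} {Θ : Set ℕ} {N P : Model}

theorem modalTheory_subset_of_forall_not_forces {e : N.U} {f : P.U}
    (h : ∀ J ∈ modalCotheory i j Θ P f, ¬ Forces i j N J e) :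
    modalTheory i j Θ N e ⊆ modalTheory i j Θ P f :=
  fun I hI => ⟨hI.1, by_contra fun hf => h I ⟨hI.1, hf⟩ hI.2⟩

theorem baseCondE_modalTheory_subset :
    BaseCondE N P Θ fun a b => modalTheory i j Θ N a ⊆ modalTheory i j Θ P b :=
  fun _ _ hab n hn ha => (hab (a := .prop n) ⟨by simpa [MForm.letters] using hn, ha⟩).2

theorem stepCondE_modalTheory_subset (hN : OmegaSaturated N) :
    StepCondE N P (fun a b => modalTheory i j Θ N a ⊆ modalTheory i j Θ P b)
      (fun b a => modalTheory i j Θ P b ⊆ modalTheory i j Θ N a) := by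
  intro a b d hab hbd
  have exists_rel : ∀ I ∈ modalTheory i j Θ P d, ∀ J ∈ modalCotheory i j Θ P d,
      ∃ c, N.rel a c ∧ Forces i j N I c ∧ ¬ Forces i j N J c := by
    intro I hI J hJ
    by_contra! hc
    have ha : .impl I J ∈ modalTheory i j Θ N a := ⟨by simp [MForm.letters, hI.1, hJ.1], hc⟩
    exact hJ.2 ((hab ha).2 d hbd hI.2)
  obtain ⟨c, hac, hforces, hnot⟩ := hN.exists_forces_not_forces (N.definable₂_relOf .r)
    ⟨_, bot_impl_bot_mem_modalTheory d⟩ (fun _ hI _ hJ => conj_mem_modalTheory hI hJ)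
    ⟨_, bot_mem_modalCotheory d⟩ (fun _ hI _ hJ => disj_mem_modalCotheory hI hJ) exists_rel
  exact ⟨c, hac, modalTheory_subset_of_forall_not_forces hnot,
    fun I hI => ⟨hI.1, hforces I hI⟩⟩

theorem box2CondE_modalTheory_subset (hN : OmegaSaturated N) :
    Box2CondE N P fun a b => modalTheory false j Θ N a ⊆ modalTheory false j Θ P b := by
  intro a b d f hab hbd hdf
  have exists_comp : ∀ J ∈ modalCotheory false j Θ P f,
      ∃ e, Relation.Comp N.rel N.relBox a e ∧ ¬ Forces false j N J e := by
    intro J hJ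
    by_contra! he
    have ha : .box J ∈ modalTheory false j Θ N a :=
      ⟨hJ.1, fun c hac e hce => he e ⟨c, hac, hce⟩⟩
    exact hJ.2 ((hab ha).2 d hbd f hdf)
  obtain ⟨e, ⟨c, hac, hce⟩, he⟩ :=
    hN.exists_forall_not_forces (N.definable₂_comp_relOf .r .box) ⟨_, bot_mem_modalCotheory f⟩
      (fun _ hI _ hJ => disj_mem_modalCotheory hI hJ) exists_comp
  exact ⟨c, e, hac, hce, modalTheory_subset_of_forall_not_forces he⟩

theorem diam1CondE_modalTheory_subset (hP : OmegaSaturated P) :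
    Diam1CondE N P fun a b => modalTheory i true Θ N a ⊆ modalTheory i true Θ P b := by
  intro a c b hab hac
  have exists_relDiam : ∀ I ∈ modalTheory i true Θ N c,
      ∃ d, P.relDiam b d ∧ Forces i true P I d := by
    intro I hI
    have ha : .diam I ∈ modalTheory i true Θ N a := ⟨hI.1, c, hac, hI.2⟩
    exact (hab ha).2
  obtain ⟨d, hbd, hd⟩ := hP.exists_forall_forces (P.definable₂_relOf .diam)
    ⟨_, bot_impl_bot_mem_modalTheory c⟩ (fun _ hI _ hJ => conj_mem_modalTheory hI hJ) exists_relDiam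
  exact ⟨d, hbd, fun I hI => ⟨hI.1, hd I hI⟩⟩

end Asimulation

/-- **Key Lemma 3 (case (2,1)).**  If M₁, M₂ are ω-saturated Θ-models and
tp_x(M₁,t) ⊆ tp_x(M₂,t') (types w.r.t. the (2,1)-standard translation), then
the relation A with a A b ⇔ tp_x(M_p,a) ⊆ tp_x(M_q,b) is a (2,1)-modal
⟨(M₁,t),(M₂,t')⟩-asimulation. -/
theorem statement_19 (Θ : Set ℕ) (M₁ M₂ : Model)
    (h1 : OmegaSaturated M₁) (h2 : OmegaSaturated M₂) (x : ℕ)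
    (t : M₁.U) (t' : M₂.U)
    (h : tpX Θ false true x M₁ t ⊆ tpX Θ false true x M₂ t') :
    IsAsimD1 false Θ M₁ M₂ t t'
      (fun a b => tpX Θ false true x M₁ a ⊆ tpX Θ false true x M₂ b)
      (fun b a => tpX Θ false true x M₂ b ⊆ tpX Θ false true x M₁ a) := by
  simp only [IsAsimD1, tpX_subset_tpX_iff, Bool.false_eq_true, if_false] at h ⊢
  exact ⟨h, baseCondE_modalTheory_subset, baseCondE_modalTheory_subset,
    stepCondE_modalTheory_subset h1, stepCondE_modalTheory_subset h2,
    ⟨box2CondE_modalTheory_subset h1, box2CondE_modalTheory_subset h2⟩,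
    diam1CondE_modalTheory_subset h2, diam1CondE_modalTheory_subset h1⟩

end ModalIntAsim
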